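/- Let R be a commutative ℚ-algebra, n ≥ 1, and A an n×n matrix over R. Define sequences recursively by d_n = 1, B'_0 = I, and for 1 ≤ k ≤ n: d_{n−k} = −(1/k)·Tr(A·B'_{k−1}) and B'_k = A·B'_{k−1} + d_{n−k}·I. Then det(A) = (−1)^n·d_0 = ((−1)^{n+1}/n)·Tr(A·B'_{n−1}). (Correctness of the determinant output of the Faddeev–Leverrier algorithm.) -/

import Mathlib

/-!
Write `χ = det (X - A)` and expand `adj (X - A) = ∑ Pₘ Xᵐ` with matrix coefficients `Pₘ`. Comparing
coefficients in `(X - A) adj (X - A) = χ · 1` gives `Pₘ = A Pₘ₊₁ + χₘ₊₁`, which is the recursion for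
`B`. Taking traces in the same identity and using Jacobi's formula `χ' = tr adj (X - A)` gives
`tr (A · adj (X - A)) = X χ' - n χ`, whose coefficient of `Xᵐ` is `-(n - m) χₘ`; this is the
recursion for `d`. Hence `d m = χₘ` for all `m ≤ n`, and `χ₀ = (-1)ⁿ det A`.
-/

open Polynomial

theorem eq_inv_natCast_smul_iff {M : Type*} [AddCommGroup M] [Module ℚ M] {k : ℕ} (hk : k ≠ 0)
    {x y : M} : x = (k : ℚ)⁻¹ • y ↔ k • x = y := by
  rw [eq_inv_smul_iff₀ (Nat.cast_ne_zero.mpr hk), Nat.cast_smul_eq_nsmul]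

theorem isSMulRegular_nat_of_module_rat {M : Type*} [AddCommGroup M] [Module ℚ M] {k : ℕ}
    (hk : k ≠ 0) : IsSMulRegular M k :=
  have := IsAddTorsionFree.of_module_rat M
  nsmul_right_injective hk

section Jacobi

variable {R ι : Type*} [CommRing R] [Fintype ι] [DecidableEq ι]

theorem derivative_det_eq_sum_det_updateCol (M : Matrix ι ι R[X]) :
    derivative M.det = ∑ i, (M.updateCol i fun j => derivative (M j i)).det := by
  have det_updateCol (i : ι) : (M.updateCol i fun j => derivative (M j i)).det =
      ∑ σ : Equiv.Perm ι, Equiv.Perm.sign σ •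
        ((∏ j ∈ Finset.univ.erase i, M (σ j) j) * derivative (M (σ i) i)) := by
    rw [Matrix.det_apply]
    refine Finset.sum_congr rfl fun σ _ => ?_
    rw [← Finset.prod_erase_mul _ _ (Finset.mem_univ i), Matrix.updateCol_self]
    congr 2
    exact Finset.prod_congr rfl fun j hj => Matrix.updateCol_ne (Finset.ne_of_mem_erase hj)
  simp_rw [det_updateCol]
  rw [Finset.sum_comm, Matrix.det_apply, derivative_sum]
  refine Finset.sum_congr rfl fun σ _ => ?_
  rw [← Finset.smul_sum, derivative_smul, derivative_prod_finset]

theorem derivative_det (M : Matrix ι ι R[X]) :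
    derivative M.det = (M.adjugate * M.map derivative).trace := by
  rw [derivative_det_eq_sum_det_updateCol]
  refine Finset.sum_congr rfl fun i _ => ?_
  rw [← Matrix.cramer_apply, Matrix.cramer_eq_adjugate_mulVec]
  rfl

end Jacobi

section Charpoly

variable {R ι : Type*} [CommRing R] [Fintype ι] [DecidableEq ι] (A : Matrix ι ι R)

theorem charmatrix_map_derivative : A.charmatrix.map derivative = 1 := by
  ext1 i j
  rcases eq_or_ne i j with rfl | hij
  · simp [Matrix.charmatrix_apply_eq]
  · simp [hij]

theorem derivative_charpoly : derivative A.charpoly = A.charmatrix.adjugate.trace := by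
  rw [Matrix.charpoly, derivative_det, charmatrix_map_derivative, mul_one]

theorem trace_map_C_mul_adjugate_charmatrix :
    (A.map C * A.charmatrix.adjugate).trace =
      X * derivative A.charpoly - Fintype.card ι • A.charpoly := by
  have map_C_eq : A.map C = Matrix.scalar ι X - A.charmatrix := by
    simp [Matrix.charmatrix]
  have scalar_mul : Matrix.scalar ι X * A.charmatrix.adjugate =
      (X : R[X]) • A.charmatrix.adjugate := by
    rw [Matrix.scalar_apply, ← Matrix.smul_eq_diagonal_mul]
  rw [map_C_eq, sub_mul, scalar_mul, Matrix.mul_adjugate, ← Matrix.charpoly, Matrix.trace_sub,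
    Matrix.trace_smul, Matrix.trace_smul, Matrix.trace_one, derivative_charpoly, smul_eq_mul,
    smul_eq_mul, nsmul_eq_mul, mul_comm A.charpoly]

theorem charpoly_coeff_card : A.charpoly.coeff (Fintype.card ι) = 1 := by
  nontriviality R
  simpa using A.charpoly_monic.coeff_natDegree

end Charpoly

theorem trace_coeff_matPolyEquiv {R ι : Type*} [CommRing R] [Fintype ι] [DecidableEq ι]
    (M : Matrix ι ι R[X]) (m : ℕ) : ((matPolyEquiv M).coeff m).trace = M.trace.coeff m := by
  simp [Matrix.trace, finsetSum_coeff, matPolyEquiv_coeff_apply]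

section AdjugatePoly

variable {R ι : Type*} [CommRing R] [Fintype ι] [DecidableEq ι]

/-- The adjugate of the characteristic matrix `X - A`, viewed as a polynomial with matrix
coefficients. These coefficients are the values of the Faddeev–LeVerrier matrices `B`. -/
noncomputable def adjugatePoly (A : Matrix ι ι R) : (Matrix ι ι R)[X] :=
  matPolyEquiv A.charmatrix.adjugate

variable (A : Matrix ι ι R)

theorem X_sub_C_mul_adjugatePoly :
    (X - C A) * adjugatePoly A = A.charpoly.map (algebraMap R (Matrix ι ι R)) := by
  rw [adjugatePoly, ← Matrix.matPolyEquiv_charmatrix, ← map_mul, Matrix.mul_adjugate,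
    ← Matrix.charpoly, matPolyEquiv_smul_one]

theorem coeff_adjugatePoly (m : ℕ) :
    (adjugatePoly A).coeff m =
      A * (adjugatePoly A).coeff (m + 1) + A.charpoly.coeff (m + 1) • 1 := by
  rw [← sub_eq_iff_eq_add', ← coeff_X_sub_C_mul, X_sub_C_mul_adjugatePoly, coeff_map,
    Algebra.algebraMap_eq_smul_one]

theorem coeff_adjugatePoly_card : (adjugatePoly A).coeff (Fintype.card ι) = 0 := by
  nontriviality Matrix ι ι R
  have : Nontrivial R := Module.nontrivial R (Matrix ι ι R)
  rcases eq_or_ne (adjugatePoly A) 0 with hP | hP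
  · rw [hP, coeff_zero]
  have natDegree_eq : 1 + (adjugatePoly A).natDegree = Fintype.card ι := by
    rw [← natDegree_X_sub_C A, ← (monic_X_sub_C A).natDegree_mul' hP, X_sub_C_mul_adjugatePoly,
      A.charpoly_monic.natDegree_map, Matrix.charpoly_natDegree_eq_dim]
  exact coeff_eq_zero_of_natDegree_lt (by lia)

theorem trace_mul_coeff_adjugatePoly {k m : ℕ} (hkm : k + m = Fintype.card ι) :
    (A * (adjugatePoly A).coeff m).trace = -(k • A.charpoly.coeff m) := by
  have coeff_X_mul_derivative : (X * derivative A.charpoly).coeff m = m • A.charpoly.coeff m := by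
    cases m <;> simp [coeff_derivative, mul_comm]
  rw [← coeff_C_mul, adjugatePoly, ← matPolyEquiv_map_C, ← map_mul, trace_coeff_matPolyEquiv,
    trace_map_C_mul_adjugate_charmatrix, coeff_sub, coeff_smul, coeff_X_mul_derivative, ← hkm,
    add_smul]
  abel

end AdjugatePoly

/-- The Faddeev–LeVerrier recursion of length `n` for `A`, with each division by `k` replaced by a
multiplication on the other side, so that it makes sense over any commutative ring. -/
structure IsFaddeevLeVerrier {R ι : Type*} [CommRing R] [Fintype ι] [DecidableEq ι] (n : ℕ)
    (A : Matrix ι ι R) (d : ℕ → R) (B : ℕ → Matrix ι ι R) : Prop where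
  d_length : d n = 1
  B_zero : B 0 = 1
  nsmul_d : ∀ k, 1 ≤ k → k ≤ n → k • d (n - k) = -(A * B (k - 1)).trace
  B_eq : ∀ k, 1 ≤ k → k ≤ n → B k = A * B (k - 1) + d (n - k) • 1

namespace IsFaddeevLeVerrier

variable {R ι : Type*} [CommRing R] [Fintype ι] [DecidableEq ι] {n : ℕ} {A : Matrix ι ι R}
  {d : ℕ → R} {B : ℕ → Matrix ι ι R}

theorem d_eq_coeff_charpoly_of_B_eq (hcard : Fintype.card ι = n)
    (hreg : ∀ k, 1 ≤ k → k ≤ n → IsSMulRegular R k) (h : IsFaddeevLeVerrier n A d B) {k m : ℕ}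
    (hkm : k + 1 + m = n) (hB : B k = (adjugatePoly A).coeff m) : d m = A.charpoly.coeff m := by
  have hm : n - (k + 1) = m := by lia
  apply hreg (k + 1) (by lia) (by lia)
  calc (k + 1) • d m = -(A * B k).trace := by
        simpa only [hm, Nat.add_sub_cancel] using h.nsmul_d (k + 1) (by lia) (by lia)
    _ = (k + 1) • A.charpoly.coeff m := by
        rw [hB, trace_mul_coeff_adjugatePoly A (hkm.trans hcard.symm), neg_neg]

theorem B_eq_coeff_adjugatePoly (hcard : Fintype.card ι = n)
    (hreg : ∀ k, 1 ≤ k → k ≤ n → IsSMulRegular R k) (h : IsFaddeevLeVerrier n A d B) {k m : ℕ}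
    (hkm : k + 1 + m = n) : B k = (adjugatePoly A).coeff m := by
  induction k generalizing m with
  | zero =>
    have hm : m + 1 = Fintype.card ι := by lia
    rw [h.B_zero, coeff_adjugatePoly, hm, coeff_adjugatePoly_card, charpoly_coeff_card, mul_zero,
      zero_add, one_smul]
  | succ k ih =>
    have hm : n - (k + 1) = m + 1 := by lia
    have hB : B k = (adjugatePoly A).coeff (m + 1) := ih (by lia)
    have hd : d (m + 1) = A.charpoly.coeff (m + 1) :=
      h.d_eq_coeff_charpoly_of_B_eq hcard hreg (by lia) hB
    rw [h.B_eq (k + 1) (by lia) (by lia), Nat.add_sub_cancel, hm, hB, hd, ← coeff_adjugatePoly]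

theorem d_eq_coeff_charpoly (hcard : Fintype.card ι = n)
    (hreg : ∀ k, 1 ≤ k → k ≤ n → IsSMulRegular R k) (h : IsFaddeevLeVerrier n A d B) {m : ℕ}
    (hm : m ≤ n) : d m = A.charpoly.coeff m := by
  rcases hm.eq_or_lt with rfl | hmn
  · rw [h.d_length, ← hcard, charpoly_coeff_card]
  · have hkm : n - (m + 1) + 1 + m = n := by lia
    exact h.d_eq_coeff_charpoly_of_B_eq hcard hreg hkm (h.B_eq_coeff_adjugatePoly hcard hreg hkm)

end IsFaddeevLeVerrier

theorem stmt11_general {R ι : Type*} [CommRing R] [Fintype ι] [DecidableEq ι] {n : ℕ}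
    (hcard : Fintype.card ι = n) (hreg : ∀ k, 1 ≤ k → k ≤ n → IsSMulRegular R k)
    {A : Matrix ι ι R} {d : ℕ → R} {B : ℕ → Matrix ι ι R} (h : IsFaddeevLeVerrier n A d B) :
    A.det = (-1 : R) ^ n * d 0 ∧ n • A.det = (-1 : R) ^ (n + 1) * (A * B (n - 1)).trace := by
  have hdet : A.det = (-1 : R) ^ n * d 0 := by
    rw [h.d_eq_coeff_charpoly hcard hreg n.zero_le, Matrix.det_eq_sign_charpoly_coeff, hcard]
  refine ⟨hdet, ?_⟩
  rcases n.eq_zero_or_pos with rfl | hn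
  · have : IsEmpty ι := Fintype.card_eq_zero_iff.mp hcard
    simp [Matrix.trace]
  · have hd : n • d 0 = -(A * B (n - 1)).trace := by simpa using h.nsmul_d n hn le_rfl
    rw [hdet, ← mul_smul_comm, hd, pow_succ, mul_neg_one, neg_mul, mul_neg]

theorem stmt11 {R : Type*} [CommRing R] [Algebra ℚ R] {n : ℕ} (hn : 1 ≤ n)
    (A : Matrix (Fin n) (Fin n) R) (d : ℕ → R) (B : ℕ → Matrix (Fin n) (Fin n) R)
    (hdn : d n = 1) (hB0 : B 0 = 1)
    (hd : ∀ k, 1 ≤ k → k ≤ n →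
      d (n - k) = -((k : ℚ)⁻¹ • Matrix.trace (A * B (k - 1))))
    (hB : ∀ k, 1 ≤ k → k ≤ n → B k = A * B (k - 1) + d (n - k) • 1) :
    A.det = (-1 : R) ^ n * d 0 ∧
      A.det = (n : ℚ)⁻¹ • ((-1 : R) ^ (n + 1) * Matrix.trace (A * B (n - 1))) := by
  rw [eq_inv_natCast_smul_iff (Nat.ne_of_gt hn)]
  exact stmt11_general (Fintype.card_fin n)
    (fun k hk _ => isSMulRegular_nat_of_module_rat (Nat.ne_of_gt hk))
    ⟨hdn, hB0, fun k hk hkn => (eq_inv_natCast_smul_iff (Nat.ne_of_gt hk)).mp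
      ((hd k hk hkn).trans (smul_neg _ _).symm), hB⟩
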